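/- arXiv:1012.4145 — 2 statements merged into one kernel-verified Lean document; each statement's English description precedes it below -/
import Mathlib

section
/- Let x ∈ ℂ with x ∉ {−1, −2, −3, …}. Then lim_{r→0⁺} (2π b(r)) · G_{b(r)}(Q(r) + b(r)·x) / (2πr)^{x+1} = (1 − e^{2πi x}) Γ(x+1), where Q(r) = b(r) + b(r)^{−1}. -/
open Complex Filter Topology

/-- ζ̄_b = exp(−πi/4 − (πi/12)(b² + b^{−2})). -/
noncomputable def zetaBar (b : ℂ) : ℂ :=
  Complex.exp (-(Real.pi * Complex.I) / 4 - (Real.pi * Complex.I) / 12 * (b ^ 2 + b⁻¹ ^ 2))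

/-- The quantum dilogarithm `G_b(x)`, defined for `Im(b²) > 0` by the infinite product
`ζ̄_b · ∏_{n=1}^∞ (1 − e^{2πi b⁻¹(x − n b⁻¹)}) / ∏_{n=0}^∞ (1 − e^{2πi b(x + n b)})`. -/
noncomputable def Gb (b x : ℂ) : ℂ :=
  zetaBar b *
      (∏' n : ℕ, (1 - Complex.exp (2 * Real.pi * Complex.I * b⁻¹ * (x - (n + 1) * b⁻¹)))) /
    (∏' n : ℕ, (1 - Complex.exp (2 * Real.pi * Complex.I * b * (x + n * b))))

/-- `b(r) = e^{iπ/4} √r`, so that `b(r)² = i r`. -/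
noncomputable def br (r : ℝ) : ℂ :=
  Complex.exp (Real.pi * Complex.I / 4) * (Real.sqrt r : ℂ)

/-- The `q`-Pochhammer symbol `(q^{x+1}; q)_∞` with `q = e^{-s}`. -/
noncomputable def qPochhammer (s : ℝ) (x : ℂ) : ℂ :=
  ∏' n : ℕ, (1 - Complex.exp (-(s * (n + 1 + x))))

lemma exp_neg_mul_nat_add (s : ℝ) (x : ℂ) (n : ℕ) :
    Complex.exp (-(s * (n + 1 + x))) =
      Complex.exp (-(s * (1 + x))) * ((Real.exp (-s) ^ n : ℝ) : ℂ) := by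
  rw [← Real.exp_nat_mul, Complex.ofReal_exp, ← Complex.exp_add]
  push_cast
  ring_nf

lemma summable_norm_neg_exp {s : ℝ} (hs : 0 < s) (x : ℂ) :
    Summable fun n : ℕ => ‖-Complex.exp (-(s * (n + 1 + x)))‖ := by
  simp_rw [exp_neg_mul_nat_add, norm_neg, norm_mul, Complex.norm_real]
  refine Summable.mul_left _ (Summable.norm ?_)
  exact summable_geometric_of_lt_one (Real.exp_pos _).le (by simpa using hs)

lemma multipliable_qPochhammer {s : ℝ} (hs : 0 < s) (x : ℂ) :
    Multipliable fun n : ℕ => 1 - Complex.exp (-(s * (n + 1 + x))) := by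
  simp_rw [sub_eq_add_neg]
  exact multipliable_one_add_of_summable (summable_norm_neg_exp hs x)

lemma qPochhammer_eq_mul {s : ℝ} (hs : 0 < s) (x : ℂ) :
    qPochhammer s x = (1 - Complex.exp (-(s * (1 + x)))) * qPochhammer s (x + 1) := by
  have key (n : ℕ) : (((n + 1 : ℕ) : ℂ) + 1 + x) = n + 1 + (x + 1) := by push_cast; ring
  have h := multipliable_qPochhammer hs (x + 1)
  rw [qPochhammer, tprod_eq_zero_mul' (by simpa only [key] using h)]
  simp only [key, Nat.cast_zero, zero_add]
  rfl

/-- `(e^{cs} - 1)/s → c` as `s → 0⁺`. -/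
lemma tendsto_exp_sub_one_div (c : ℂ) :
    Tendsto (fun s : ℝ => (Complex.exp (c * s) - 1) / s) (𝓝[>] 0) (𝓝 c) := by
  have h : HasDerivAt (fun s : ℝ => Complex.exp (c * s)) c 0 := by
    have h1 : HasDerivAt (fun s : ℝ => c * (s : ℂ)) (c * 1) 0 :=
      (Complex.ofRealCLM.hasDerivAt (x := 0)).const_mul c
    simpa using h1.cexp
  have := (hasDerivAt_iff_tendsto_slope.mp h).mono_left
    (nhdsWithin_mono 0 (fun s (hs : 0 < s) => hs.ne'))
  refine this.congr fun s => ?_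
  simp [slope, div_eq_inv_mul]

lemma tendsto_one_sub_exp_neg_div (c : ℂ) :
    Tendsto (fun s : ℝ => (1 - Complex.exp (-(s * c))) / s) (𝓝[>] 0) (𝓝 c) := by
  have := (tendsto_exp_sub_one_div (-c)).neg
  rw [neg_neg] at this
  refine this.congr fun s => ?_
  rw [← neg_div, neg_sub, neg_mul, mul_comm c]

/-- `(1 - e^{-cs})/(e^{ms} - 1)`. For `c = 1` and `c = x`, one plus this quantity is the ratio of
`1 - q^{m+c}` to `1 - q^m` for `q = e^{-s}`. -/
noncomputable def qIncrement (c : ℂ) (m : ℕ) (s : ℝ) : ℂ :=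
  (1 - Complex.exp (-(s * c))) / (Complex.exp (s * m) - 1)

/-- The real version of `qIncrement 1`. -/
noncomputable def qIncrementOne (m : ℕ) (s : ℝ) : ℝ :=
  (1 - Real.exp (-s)) / (Real.exp (s * m) - 1)

lemma ofReal_qIncrementOne (m : ℕ) (s : ℝ) : (qIncrementOne m s : ℂ) = qIncrement 1 m s := by
  simp [qIncrement, qIncrementOne]

lemma tendsto_qIncrement (c : ℂ) {m : ℕ} (hm : m ≠ 0) :
    Tendsto (qIncrement c m) (𝓝[>] 0) (𝓝 (c / m)) := by
  have h := (tendsto_one_sub_exp_neg_div c).div (tendsto_exp_sub_one_div m) (by exact_mod_cast hm)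
  refine h.congr' ?_
  filter_upwards [self_mem_nhdsWithin] with s (hs : 0 < s)
  have : (s : ℂ) ≠ 0 := by exact_mod_cast hs.ne'
  simp only [Pi.div_apply, qIncrement, mul_comm (m : ℂ)]
  field_simp

lemma tendsto_qIncrementOne {m : ℕ} (hm : m ≠ 0) :
    Tendsto (qIncrementOne m) (𝓝[>] 0) (𝓝 (1 / m)) := by
  have h := (tendsto_qIncrement 1 hm).congr fun s => (ofReal_qIncrementOne m s).symm
  exact (Complex.continuous_re.tendsto (1 / m : ℝ)).comp (by simpa using h)

lemma exp_mul_sub_one_pos {s : ℝ} (hs : 0 < s) {m : ℕ} (hm : m ≠ 0) :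
    0 < Real.exp (s * m) - 1 := by
  have : (0 : ℝ) < m := by exact_mod_cast Nat.pos_of_ne_zero hm
  have := Real.one_lt_exp_iff.mpr (mul_pos hs this)
  linarith

lemma one_add_qIncrement {s : ℝ} (hs : 0 < s) {m : ℕ} (hm : m ≠ 0) (c : ℂ) :
    1 + qIncrement c m s =
      (1 - Complex.exp (-(s * (m + c)))) / (1 - Complex.exp (-(s * m))) := by
  have h0 : Complex.exp (s * m) - 1 ≠ 0 := by
    have := (exp_mul_sub_one_pos hs hm).ne'
    exact_mod_cast this
  have h1 : Complex.exp (s * m) ≠ 0 := Complex.exp_ne_zero _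
  have h2 : 1 - (Complex.exp (s * m))⁻¹ ≠ 0 := by
    intro h
    apply h0
    field_simp at h
    simpa using h
  rw [qIncrement, mul_add, neg_add, Complex.exp_add, Complex.exp_neg (s * m)]
  field_simp
  ring

lemma one_add_qIncrementOne {s : ℝ} (hs : 0 < s) {m : ℕ} (hm : m ≠ 0) :
    1 + qIncrementOne m s =
      (1 - Real.exp (-(s * (m + 1)))) / (1 - Real.exp (-(s * m))) := by
  have := one_add_qIncrement hs hm 1
  rw [← ofReal_qIncrementOne] at this
  exact_mod_cast this

lemma qIncrementOne_nonneg {s : ℝ} (hs : 0 < s) {m : ℕ} (hm : m ≠ 0) :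
    0 ≤ qIncrementOne m s := by
  refine div_nonneg ?_ (exp_mul_sub_one_pos hs hm).le
  simpa using hs.le

lemma qIncrementOne_le {s : ℝ} (hs : 0 < s) {m : ℕ} (hm : m ≠ 0) :
    qIncrementOne m s ≤ 1 / m := by
  have hm' : (0 : ℝ) < m := by exact_mod_cast Nat.pos_of_ne_zero hm
  rw [qIncrementOne, div_le_div_iff₀ (exp_mul_sub_one_pos hs hm) hm']
  have h1 := Real.add_one_le_exp (-s)
  have h2 := Real.add_one_le_exp (s * m)
  nlinarith

/-- For `Re x ≥ 0` the denominators `1 + qIncrement x m s` stay away from zero. -/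
lemma one_le_norm_one_add_qIncrement {s : ℝ} (hs : 0 < s) {m : ℕ} (hm : m ≠ 0) {x : ℂ}
    (hx : 0 ≤ x.re) : 1 ≤ ‖1 + qIncrement x m s‖ := by
  have hm' : (0 : ℝ) < m := by exact_mod_cast Nat.pos_of_ne_zero hm
  have hlt : Real.exp (-(s * m)) < 1 := by
    rw [Real.exp_lt_one_iff]
    have := mul_pos hs hm'
    linarith
  have hden : (1 - Complex.exp (-(s * m))) = ((1 - Real.exp (-(s * m)) : ℝ) : ℂ) := by
    push_cast; rfl
  rw [one_add_qIncrement hs hm, norm_div, hden, Complex.norm_real,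
    Real.norm_of_nonneg (by linarith), one_le_div (by linarith)]
  have h1 : ‖Complex.exp (-(s * (m + x)))‖ ≤ Real.exp (-(s * m)) := by
    rw [Complex.norm_exp]
    apply Real.exp_le_exp.mpr
    have := mul_nonneg hs.le hx
    simp
    nlinarith
  have h2 := norm_sub_norm_le (1 : ℂ) (Complex.exp (-(s * (m + x))))
  rw [norm_one] at h2
  linarith

lemma exists_norm_one_add_cpow_sub_le (x : ℂ) :
    ∃ C, ∀ t ∈ Set.Icc (0 : ℝ) 1, ‖((1 + t : ℝ) : ℂ) ^ x - 1 - x * t‖ ≤ C * t ^ 2 := by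
  have hcd : ContDiffOn ℝ (1 + 1) (fun t : ℝ => ((1 + t : ℝ) : ℂ) ^ x) (Set.Icc 0 1) := by
    intro t ht
    apply ContDiffAt.contDiffWithinAt
    have hne : (1 + t : ℝ) ≠ 0 := by linarith [ht.1]
    have heq : (fun t : ℝ => ((1 + t : ℝ) : ℂ) ^ x) =ᶠ[𝓝 t]
        fun t : ℝ => Complex.exp (((Real.log (1 + t) : ℝ) : ℂ) * x) := by
      filter_upwards [lt_mem_nhds (show -1 < t by linarith [ht.1])] with u hu
      have : (0 : ℝ) < 1 + u := by linarith
      rw [Complex.cpow_def_of_ne_zero (by exact_mod_cast this.ne'), Complex.ofReal_log this.le]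
    refine ContDiffAt.congr_of_eventuallyEq ?_ heq
    have hlog : ContDiffAt ℝ (1 + 1) (fun t : ℝ => Real.log (1 + t)) t :=
      (contDiffAt_const.add contDiffAt_id).log hne
    exact ((Complex.ofRealCLM.contDiff.contDiffAt.comp t hlog).mul contDiffAt_const).cexp
  obtain ⟨C, hC⟩ := exists_taylor_mean_remainder_bound (n := 1) zero_le_one (by exact_mod_cast hcd)
  refine ⟨C, fun t ht => ?_⟩
  have hd : HasDerivAt (fun t : ℝ => ((1 + t : ℝ) : ℂ) ^ x) x 0 := by
    have h1 : HasDerivAt (fun z : ℂ => (1 + z) ^ x) x 0 := by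
      simpa using ((hasDerivAt_id (0 : ℂ)).const_add 1).cpow_const (c := x) (by simp)
    simpa using HasDerivAt.comp_ofReal (z := 0) (by simpa using h1)
  have hdw := hd.hasDerivWithinAt (s := Set.Icc 0 1) |>.derivWithin
    (uniqueDiffOn_Icc_zero_one 0 (by simp))
  have := hC t ht
  simp only [taylorWithinEval_succ, taylor_within_zero_eval, zero_add, iteratedDerivWithin_one, hdw] at this
  refine le_of_eq_of_le ?_ (this.trans_eq (by ring))
  congr 1
  simp
  ring

lemma norm_mul_one_sub_exp_sub_le {x : ℂ} {s : ℝ} (hs : 0 < s) (hs1 : s ≤ 1)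
    (hsx : s * ‖x‖ ≤ 1) :
    ‖x * (1 - Complex.exp (-(s * 1))) - (1 - Complex.exp (-(s * x)))‖ ≤
      (‖x‖ + ‖x‖ ^ 2) * s ^ 2 := by
  have h1 : ‖-((s : ℂ) * 1)‖ = s := by simp [abs_of_pos hs]
  have h2 : ‖-((s : ℂ) * x)‖ = s * ‖x‖ := by simp [abs_of_pos hs]
  have e1 := Complex.norm_exp_sub_one_sub_id_le (h1.trans_le hs1)
  have e2 := Complex.norm_exp_sub_one_sub_id_le (h2.trans_le hsx)
  rw [h1] at e1
  rw [h2] at e2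
  calc _ = ‖(Complex.exp (-(s * x)) - 1 - -(s * x)) -
        x * (Complex.exp (-(s * 1)) - 1 - -(s * 1))‖ := by congr 1; ring
    _ ≤ (s * ‖x‖) ^ 2 + ‖x‖ * s ^ 2 := by
      refine (norm_sub_le _ _).trans (add_le_add e2 ?_)
      rw [norm_mul]
      exact mul_le_mul_of_nonneg_left e1 (norm_nonneg x)
    _ = _ := by ring

/-- The factors of the Euler-type product for the `q`-Gamma function. -/
noncomputable def qGammaFactor (x : ℂ) (s : ℝ) (n : ℕ) : ℂ :=
  ((1 + qIncrementOne (n + 1) s : ℝ) : ℂ) ^ x / (1 + qIncrement x (n + 1) s)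

/-- The factors of Euler's product for `Γ(x + 1)`. -/
noncomputable def gammaFactor (x : ℂ) (n : ℕ) : ℂ :=
  ((1 + 1 / ((n + 1 : ℕ) : ℝ) : ℝ) : ℂ) ^ x / (1 + x / ((n + 1 : ℕ) : ℂ))

lemma exists_norm_qGammaFactor_sub_one_le {x : ℂ} (hx : 0 ≤ x.re) :
    ∃ C : ℝ, ∀ᶠ s : ℝ in 𝓝[>] 0, ∀ n : ℕ,
      ‖qGammaFactor x s n - 1‖ ≤ C * (1 / ((n + 1 : ℕ) : ℝ) ^ 2) := by
  obtain ⟨C, hC⟩ := exists_norm_one_add_cpow_sub_le x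
  refine ⟨|C| + 2 * (‖x‖ + ‖x‖ ^ 2), ?_⟩
  have hsmall : ∀ᶠ s : ℝ in 𝓝[>] 0, s * ‖x‖ < 1 := by
    have : Tendsto (fun s : ℝ => s * ‖x‖) (𝓝[>] 0) (𝓝 (0 * ‖x‖)) :=
      (tendsto_id.mono_left nhdsWithin_le_nhds).mul_const _
    exact this.eventually_lt_const (by simp)
  filter_upwards [self_mem_nhdsWithin, hsmall, Ioc_mem_nhdsGT (zero_lt_one (α := ℝ))]
    with s (hs : 0 < s) hsx hs1 n
  have hm : n + 1 ≠ 0 := n.succ_ne_zero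
  rw [qGammaFactor]
  generalize n + 1 = m at hm ⊢
  have hm1 : (1 : ℝ) ≤ m := by exact_mod_cast Nat.one_le_iff_ne_zero.mpr hm
  have hδ0 := qIncrementOne_nonneg hs hm
  have hδ := qIncrementOne_le hs hm
  have hδ1 : qIncrementOne m s ≤ 1 := hδ.trans (by rw [div_le_one] <;> linarith)
  have hden := one_le_norm_one_add_qIncrement hs hm hx
  have hne : 1 + qIncrement x m s ≠ 0 := norm_pos_iff.mp (by linarith)
  have hb1 : ‖((1 + qIncrementOne m s : ℝ) : ℂ) ^ x - 1 - x * qIncrementOne m s‖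
      ≤ |C| * (1 / (m : ℝ) ^ 2) := by
    refine (hC _ ⟨hδ0, hδ1⟩).trans ?_
    rw [← one_div_pow]
    gcongr
    exact le_abs_self C
  have hb2 : ‖x * qIncrementOne m s - qIncrement x m s‖ ≤
      2 * (‖x‖ + ‖x‖ ^ 2) * (1 / (m : ℝ) ^ 2) := by
    have hq := Real.quadratic_le_exp_of_nonneg (x := s * m) (by positivity)
    have hpos := exp_mul_sub_one_pos hs hm
    have hE : ‖Complex.exp (s * m) - 1‖ = Real.exp (s * m) - 1 := by
      rw [← Real.norm_of_nonneg hpos.le, ← Complex.norm_real]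
      push_cast
      rfl
    rw [ofReal_qIncrementOne, qIncrement, qIncrement, mul_div_assoc', ← sub_div, norm_div, hE,
      div_le_iff₀ hpos]
    refine (norm_mul_one_sub_exp_sub_le hs hs1.2 hsx.le).trans ?_
    have h3 : (s * m) ^ 2 / 2 ≤ Real.exp (s * m) - 1 := by
      nlinarith [mul_pos hs (zero_lt_one.trans_le hm1)]
    calc (‖x‖ + ‖x‖ ^ 2) * s ^ 2
        = 2 * (‖x‖ + ‖x‖ ^ 2) * (1 / (m : ℝ) ^ 2) * ((s * m) ^ 2 / 2) := by field_simp
      _ ≤ _ := by gcongr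
  calc ‖((1 + qIncrementOne m s : ℝ) : ℂ) ^ x / (1 + qIncrement x m s) - 1‖
      = ‖(((1 + qIncrementOne m s : ℝ) : ℂ) ^ x - 1 - x * qIncrementOne m s) +
          (x * qIncrementOne m s - qIncrement x m s)‖ / ‖1 + qIncrement x m s‖ := by
        rw [← norm_div]
        congr 1
        field_simp
        ring
    _ ≤ ‖(((1 + qIncrementOne m s : ℝ) : ℂ) ^ x - 1 - x * qIncrementOne m s) +
          (x * qIncrementOne m s - qIncrement x m s)‖ := div_le_self (norm_nonneg _) hden
    _ ≤ _ := (norm_add_le _ _).trans ((add_le_add hb1 hb2).trans_eq (by ring))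

lemma tendsto_qGammaFactor {x : ℂ} (hx : 0 ≤ x.re) (n : ℕ) :
    Tendsto (qGammaFactor x · n) (𝓝[>] 0) (𝓝 (gammaFactor x n)) := by
  have hm : n + 1 ≠ 0 := n.succ_ne_zero
  refine Tendsto.div ?_ ((tendsto_qIncrement x hm).const_add 1) ?_
  · exact (Complex.continuousAt_ofReal_cpow_const _ x (Or.inr (by positivity))).tendsto.comp
      ((tendsto_qIncrementOne hm).const_add 1)
  · intro h
    have := congrArg Complex.re h
    rw [Complex.add_re, Complex.div_natCast_re, Complex.one_re, Complex.zero_re] at this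
    have h2 : 0 ≤ x.re / ((n + 1 : ℕ) : ℝ) := by positivity
    linarith

lemma prod_cpow_ofReal {f : ℕ → ℝ} (hf : ∀ n, 0 ≤ f n) (x : ℂ) (N : ℕ) :
    ∏ n ∈ Finset.range N, (f n : ℂ) ^ x = ((∏ n ∈ Finset.range N, f n : ℝ) : ℂ) ^ x := by
  induction N with
  | zero => simp
  | succ N ih =>
    rw [Finset.prod_range_succ, ih, Finset.prod_range_succ, Complex.ofReal_mul,
      Complex.mul_cpow_ofReal_nonneg (Finset.prod_nonneg fun i _ => hf i) (hf N)]

lemma prod_gammaFactor (x : ℂ) (N : ℕ) :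
    ∏ n ∈ Finset.range N, gammaFactor x n =
      ((N + 1 : ℝ) : ℂ) ^ x * N.factorial / ∏ j ∈ Finset.range N, (x + 1 + j) := by
  have hden (n : ℕ) : 1 + x / ((n + 1 : ℕ) : ℂ) = (x + 1 + n) / ((n + 1 : ℕ) : ℂ) := by
    have : ((n : ℂ) + 1) ≠ 0 := by exact_mod_cast n.succ_ne_zero
    push_cast
    field_simp
    ring
  have hnum : ∏ n ∈ Finset.range N, (1 + 1 / ((n + 1 : ℕ) : ℝ)) = N + 1 := by
    induction N with
    | zero => simp
    | succ N ih =>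
      rw [Finset.prod_range_succ, ih]
      push_cast
      field_simp
  simp only [gammaFactor, Finset.prod_div_distrib, hden]
  rw [prod_cpow_ofReal (fun n => by positivity), hnum, div_div_eq_mul_div,
    ← Finset.prod_range_add_one_eq_factorial]
  push_cast
  rfl

lemma tendsto_prod_gammaFactor {x : ℂ} (hx : 0 ≤ x.re) :
    Tendsto (fun N => ∏ n ∈ Finset.range N, gammaFactor x n) atTop
      (𝓝 (Complex.Gamma (x + 1))) := by
  have h1 : Tendsto (fun N : ℕ => (1 + 1 / (N : ℝ) : ℝ)) atTop (𝓝 1) := by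
    simpa using (tendsto_one_div_atTop_nhds_zero_nat (𝕜 := ℝ)).const_add 1
  have h2 : Tendsto (fun N : ℕ => ((1 + 1 / (N : ℝ) : ℝ) : ℂ) ^ x) atTop (𝓝 1) := by
    have := (Complex.continuousAt_ofReal_cpow_const 1 x (Or.inr one_ne_zero)).tendsto.comp h1
    simpa [Function.comp_def] using this
  have h3 : Tendsto (fun N : ℕ => 1 + (x + 1) * (1 / (N : ℂ))) atTop (𝓝 1) := by
    simpa using ((tendsto_one_div_atTop_nhds_zero_nat (𝕜 := ℂ)).const_mul (x + 1)).const_add 1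
  have h4 := ((Complex.GammaSeq_tendsto_Gamma (x + 1)).mul h2).mul h3
  rw [mul_one, mul_one] at h4
  refine h4.congr' ?_
  filter_upwards [eventually_gt_atTop 0] with N hN
  have hN' : (0 : ℝ) < N := by exact_mod_cast hN
  have hNC : (N : ℂ) ≠ 0 := by exact_mod_cast hN.ne'
  have hne : x + 1 + N ≠ 0 := by
    intro h
    have := congrArg Complex.re h
    simp at this
    linarith
  have hpow : ((N + 1 : ℝ) : ℂ) ^ x = (N : ℂ) ^ x * ((1 + 1 / (N : ℝ) : ℝ) : ℂ) ^ x := by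
    rw [← Complex.ofReal_natCast,
      ← Complex.mul_cpow_ofReal_nonneg hN'.le (by positivity), ← Complex.ofReal_mul]
    congr 2
    field_simp
  rw [prod_gammaFactor, Complex.GammaSeq, Finset.prod_range_succ, hpow,
    Complex.cpow_add _ _ hNC, Complex.cpow_one]
  have e : 1 + (x + 1) * (1 / (N : ℂ)) = (x + 1 + N) / N := by
    field_simp
    ring
  rw [e]
  field_simp

lemma prod_qGammaFactor {x : ℂ} {s : ℝ} (hs : 0 < s) (N : ℕ) :
    ∏ n ∈ Finset.range N, qGammaFactor x s n =
      (((1 - Real.exp (-(s * (N + 1)))) / (1 - Real.exp (-s)) : ℝ) : ℂ) ^ x *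
        ((∏ n ∈ Finset.range N, (1 - Complex.exp (-(s * (n + 1 + 0))))) /
          ∏ n ∈ Finset.range N, (1 - Complex.exp (-(s * (n + 1 + x))))) := by
  have hpos (n : ℕ) : 0 < 1 - Real.exp (-(s * (n + 1))) := by
    rw [sub_pos, Real.exp_lt_one_iff, neg_lt_zero]
    positivity
  have hnum : ∏ n ∈ Finset.range N, (1 + qIncrementOne (n + 1) s) =
      (1 - Real.exp (-(s * (N + 1)))) / (1 - Real.exp (-s)) := by
    induction N with
    | zero => simpa using (div_self (by simpa using (hpos 0).ne')).symm
    | succ N ih =>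
      rw [Finset.prod_range_succ, ih, one_add_qIncrementOne hs N.succ_ne_zero]
      have := (hpos N).ne'
      push_cast
      field_simp
  simp only [qGammaFactor, Finset.prod_div_distrib]
  rw [prod_cpow_ofReal (fun n => add_nonneg zero_le_one (qIncrementOne_nonneg hs n.succ_ne_zero)),
    hnum, mul_div_assoc']
  simp only [one_add_qIncrement hs (Nat.succ_ne_zero _), Finset.prod_div_distrib]
  rw [div_div_eq_mul_div]
  push_cast
  simp

lemma summable_one_div_succ_sq : Summable fun n : ℕ => 1 / ((n + 1 : ℕ) : ℝ) ^ 2 :=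
  (summable_nat_add_iff 1).mpr (Real.summable_one_div_nat_pow.mpr one_lt_two)

lemma qPochhammer_ne_zero {s : ℝ} (hs : 0 < s) {x : ℂ} (hx : 0 ≤ x.re) :
    qPochhammer s x ≠ 0 := by
  simp_rw [qPochhammer, sub_eq_add_neg]
  refine tprod_one_add_ne_zero_of_summable (fun n h => ?_) (summable_norm_neg_exp hs x)
  have h1 : Complex.exp (-(s * (n + 1 + x))) = 1 := by linear_combination -h
  have h2 : ‖Complex.exp (-(s * (n + 1 + x)))‖ < 1 := by
    rw [Complex.norm_exp, Real.exp_lt_one_iff]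
    have : 0 < s * (n + 1 + x.re) := by positivity
    simpa using this
  simp [h1] at h2

lemma tprod_qGammaFactor {x : ℂ} (hx : 0 ≤ x.re) {s : ℝ} (hs : 0 < s)
    (hm : Multipliable (qGammaFactor x s)) :
    ∏' n, qGammaFactor x s n =
      ((1 / (1 - Real.exp (-s)) : ℝ) : ℂ) ^ x * (qPochhammer s 0 / qPochhammer s x) := by
  refine tendsto_nhds_unique hm.hasProd.tendsto_prod_nat ?_
  simp_rw [prod_qGammaFactor hs]
  have hpos : 0 < 1 - Real.exp (-s) := by simpa using hs
  refine Tendsto.mul ?_ (Tendsto.div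
    (multipliable_qPochhammer hs 0).hasProd.tendsto_prod_nat
    (multipliable_qPochhammer hs x).hasProd.tendsto_prod_nat (qPochhammer_ne_zero hs hx))
  refine (Complex.continuousAt_ofReal_cpow_const _ x
    (Or.inr (one_div_pos.mpr hpos).ne')).tendsto.comp (Tendsto.div_const ?_ _)
  have h1 : Tendsto (fun N : ℕ => s * ((N : ℝ) + 1)) atTop atTop :=
    (tendsto_atTop_add_const_right _ _ tendsto_natCast_atTop_atTop).const_mul_atTop hs
  simpa using (Real.tendsto_exp_neg_atTop_nhds_zero.comp h1).const_sub 1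

/-- The `q`-Gamma function converges to the Gamma function on the right half-plane. -/
lemma tendsto_qGamma_of_re_nonneg {x : ℂ} (hx : 0 ≤ x.re) :
    Tendsto (fun s : ℝ => qPochhammer s 0 / qPochhammer s x / (s : ℂ) ^ x) (𝓝[>] 0)
      (𝓝 (Complex.Gamma (x + 1))) := by
  obtain ⟨C, hC⟩ := exists_norm_qGammaFactor_sub_one_le hx
  have hsum : Summable fun n : ℕ => C * (1 / ((n + 1 : ℕ) : ℝ) ^ 2) :=
    summable_one_div_succ_sq.mul_left C
  have hlim := tendsto_tprod_one_add_of_dominated_convergence (𝓕 := 𝓝[>] (0 : ℝ))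
    (f := fun s n => qGammaFactor x s n - 1) (g := fun n => gammaFactor x n - 1) hsum
    (fun n => (tendsto_qGammaFactor hx n).sub_const 1) hC
  simp only [add_sub_cancel] at hlim
  have hg : Multipliable (gammaFactor x) := by
    have : Multipliable fun n => 1 + (gammaFactor x n - 1) :=
      multipliable_one_add_of_summable <| hsum.of_nonneg_of_le (fun _ => norm_nonneg _) fun n =>
        le_of_tendsto ((tendsto_qGammaFactor hx n).sub_const 1).norm (hC.mono fun s hs => hs n)
    simpa using this
  rw [tendsto_nhds_unique hg.hasProd.tendsto_prod_nat (tendsto_prod_gammaFactor hx)] at hlim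
  have hratio : Tendsto (fun s : ℝ => (((1 - Real.exp (-s)) / s : ℝ) : ℂ) ^ x) (𝓝[>] 0)
      (𝓝 1) := by
    have h1 : Tendsto (fun s : ℝ => (1 - Real.exp (-s)) / s) (𝓝[>] 0) (𝓝 1) := by
      have h := (Complex.continuous_re.tendsto _).comp (tendsto_one_sub_exp_neg_div 1)
      refine h.congr fun s => ?_
      rw [Function.comp_apply, ← Complex.ofReal_re ((1 - Real.exp (-s)) / s)]
      push_cast
      rw [mul_one]
    have h := (Complex.continuousAt_ofReal_cpow_const 1 x (Or.inr one_ne_zero)).tendsto.comp h1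
    simpa [Function.comp_def] using h
  have hprod := hlim.mul hratio
  rw [mul_one] at hprod
  refine hprod.congr' ?_
  filter_upwards [self_mem_nhdsWithin, hC] with s (hs : 0 < s) hCs
  have hpos : 0 < 1 - Real.exp (-s) := by simpa using hs
  have hm : Multipliable (qGammaFactor x s) := by
    have : Multipliable fun n => 1 + (qGammaFactor x s n - 1) :=
      multipliable_one_add_of_summable <| hsum.of_nonneg_of_le (fun _ => norm_nonneg _) hCs
    simpa using this
  have hpow : ((1 / (1 - Real.exp (-s)) : ℝ) : ℂ) ^ x * (((1 - Real.exp (-s)) / s : ℝ) : ℂ) ^ x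
      * (s : ℂ) ^ x = 1 := by
    rw [← Complex.mul_cpow_ofReal_nonneg (by positivity) (by positivity), ← Complex.ofReal_mul,
      ← Complex.mul_cpow_ofReal_nonneg (by positivity) hs.le, ← Complex.ofReal_mul]
    rw [show 1 / (1 - Real.exp (-s)) * ((1 - Real.exp (-s)) / s) * s = 1 by field_simp]
    simp
  have hs0 : (s : ℂ) ^ x ≠ 0 := by
    rw [Ne, Complex.cpow_eq_zero_iff]
    exact fun h => hs.ne' (by exact_mod_cast h.1)
  rw [tprod_qGammaFactor hx hs hm, eq_div_iff hs0]
  linear_combination (qPochhammer s 0 / qPochhammer s x) * hpow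

/-- The `q`-Gamma function converges to the Gamma function away from the poles. -/
lemma tendsto_qGamma {x : ℂ} (hx : ∀ n : ℕ, x ≠ -((n : ℂ) + 1)) :
    Tendsto (fun s : ℝ => qPochhammer s 0 / qPochhammer s x / (s : ℂ) ^ x) (𝓝[>] 0)
      (𝓝 (Complex.Gamma (x + 1))) := by
  obtain ⟨k, hk⟩ := exists_nat_ge (-x.re)
  induction k generalizing x with
  | zero => exact tendsto_qGamma_of_re_nonneg (by simpa using hk)
  | succ k ih =>
    have hx1 : 1 + x ≠ 0 := fun h => hx 0 (by linear_combination h)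
    have h := ih (x := x + 1)
      (fun n hn => hx (n + 1) (by push_cast; linear_combination hn))
      (by simp at hk ⊢; linarith)
    have hG : Complex.Gamma (x + 1) = Complex.Gamma (x + 1 + 1) / (1 + x) := by
      rw [Complex.Gamma_add_one (x + 1) (by rwa [add_comm])]
      field_simp
      ring
    rw [hG]
    refine (h.div (tendsto_one_sub_exp_neg_div (1 + x)) hx1).congr' ?_
    filter_upwards [self_mem_nhdsWithin] with s (hs : 0 < s)
    have hs0 : (s : ℂ) ≠ 0 := by exact_mod_cast hs.ne'
    rw [Pi.div_apply, qPochhammer_eq_mul hs x, Complex.cpow_add _ _ hs0, Complex.cpow_one]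
    field_simp

lemma tendsto_tprod_one_sub_mul_pow (c : ℂ) :
    Tendsto (fun q : ℂ => ∏' n : ℕ, (1 - c * q ^ (n + 1))) (𝓝 0) (𝓝 1) := by
  have h := tendsto_tprod_one_add_of_dominated_convergence (𝓕 := 𝓝 0) (g := 0)
    (f := fun (q : ℂ) (n : ℕ) => -(c * q ^ (n + 1)))
    (bound := fun n => ‖c‖ * (1 / 2 : ℝ) ^ (n + 1))
    (Summable.mul_left _ ((summable_nat_add_iff 1).mpr summable_geometric_two))
    (fun k => by
      simpa using (((continuous_pow (M := ℂ) (k + 1)).tendsto 0).const_mul c).neg) (by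
      filter_upwards [Metric.ball_mem_nhds (0 : ℂ) (by norm_num : (0 : ℝ) < 1 / 2)] with q hq k
      rw [norm_neg, norm_mul, norm_pow]
      gcongr
      exact (mem_ball_zero_iff.mp hq).le)
  simpa [sub_eq_add_neg] using h

lemma tendsto_exp_neg_two_pi_div :
    Tendsto (fun r : ℝ => Complex.exp (-(2 * Real.pi / r))) (𝓝[>] 0) (𝓝 0) := by
  have h1 : Tendsto (fun r : ℝ => 2 * Real.pi / r) (𝓝[>] 0) atTop := by
    simp_rw [div_eq_mul_inv]
    exact tendsto_inv_nhdsGT_zero.const_mul_atTop Real.two_pi_pos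
  have h2 := (Complex.continuous_ofReal.tendsto 0).comp
    (Real.tendsto_exp_neg_atTop_nhds_zero.comp h1)
  simpa [Function.comp_def] using h2

/-- The transformation law of the Dedekind eta function at `z = ir`. -/
lemma sqrt_mul_tprod_eq_qPochhammer {r : ℝ} (hr : 0 < r) :
    (Real.sqrt r : ℂ) * Complex.exp (Real.pi * r / 12 - Real.pi / (12 * r)) *
        ∏' n : ℕ, (1 - 1 * Complex.exp (-(2 * Real.pi / r)) ^ (n + 1)) =
      r * qPochhammer (2 * Real.pi * r) 0 := by
  have hr0 : (r : ℂ) ≠ 0 := by exact_mod_cast hr.ne'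
  have h := ModularForm.eta_comp_eq_csqrt_I_inv (x := I * r)
    (by simpa [UpperHalfPlane.upperHalfPlaneSet] using hr)
  have hinv : -1 / (I * r) = I / r := by
    field_simp
    simp
  have hsqrt : Complex.sqrt (I * r) = Complex.sqrt I * Real.sqrt r := by
    rw [Complex.sqrt, Complex.sqrt, Complex.cpow_def_of_ne_zero (mul_ne_zero I_ne_zero hr0),
      Complex.cpow_def_of_ne_zero I_ne_zero, Complex.log_mul_ofReal r hr I I_ne_zero,
      Real.sqrt_eq_rpow, Real.rpow_def_of_pos hr,
      Complex.ofReal_exp, ← Complex.exp_add]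
    congr 1
    push_cast
    ring
  have hI : Complex.sqrt I ≠ 0 := by simp [Complex.sqrt]
  simp only [Function.comp_apply, hinv, Pi.smul_apply, Pi.mul_apply, hsqrt, smul_eq_mul,
    ModularForm.eta, ModularForm.eta_q_eq_pow, Function.Periodic.qParam] at h
  have hq1 : Complex.exp (2 * Real.pi * I * (I / r)) = Complex.exp (-(2 * Real.pi / r)) := by
    congr 1
    linear_combination (2 * Real.pi / r : ℂ) * Complex.I_sq
  have hP : ∏' n : ℕ, (1 - Complex.exp (2 * Real.pi * I * (I * r)) ^ (n + 1)) =
      qPochhammer (2 * Real.pi * r) 0 := by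
    refine tprod_congr fun n => ?_
    rw [← Complex.exp_nat_mul]
    congr 2
    push_cast
    linear_combination ((n + 1) * 2 * Real.pi * r : ℂ) * Complex.I_sq
  have he1 : Complex.exp (2 * Real.pi * I * (I / r) / ((24 : ℝ) : ℂ)) =
      Complex.exp (-(Real.pi / (12 * r))) := by
    congr 1
    push_cast
    linear_combination (Real.pi / (12 * r) : ℂ) * Complex.I_sq
  have he2 : Complex.exp (2 * Real.pi * I * (I * r) / ((24 : ℝ) : ℂ)) =
      Complex.exp (-(Real.pi * r / 12)) := by
    congr 1
    push_cast
    linear_combination (Real.pi * r / 12 : ℂ) * Complex.I_sq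
  rw [hq1, hP, he1, he2, mul_assoc, inv_mul_cancel_left₀ hI] at h
  have hmul : Complex.exp (Real.pi * r / 12) * Complex.exp (-(Real.pi * r / 12)) = 1 := by
    rw [← Complex.exp_add, add_neg_cancel, Complex.exp_zero]
  have hss : (Real.sqrt r : ℂ) * Real.sqrt r = r := by
    exact_mod_cast Real.mul_self_sqrt hr.le
  simp only [one_mul]
  rw [sub_eq_add_neg, Complex.exp_add]
  linear_combination (Real.sqrt r * Complex.exp (Real.pi * r / 12) : ℂ) * h +
    (Real.sqrt r * Real.sqrt r * qPochhammer (2 * Real.pi * r) 0 : ℂ) * hmul +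
    qPochhammer (2 * Real.pi * r) 0 * hss

lemma br_sq {r : ℝ} (hr : 0 < r) : br r ^ 2 = I * r := by
  have h : Complex.exp (Real.pi * I / 4) ^ 2 = I := by
    rw [← Complex.exp_nat_mul, show ((2 : ℕ) : ℂ) * (Real.pi * I / 4) = Real.pi / 2 * I by
      push_cast; ring, Complex.exp_pi_div_two_mul_I]
  have hss : (Real.sqrt r : ℂ) ^ 2 = r := by exact_mod_cast Real.sq_sqrt hr.le
  rw [br, mul_pow, h, hss]

lemma br_ne_zero {r : ℝ} (hr : 0 < r) : br r ≠ 0 := by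
  refine mul_ne_zero (Complex.exp_ne_zero _) ?_
  exact_mod_cast (Real.sqrt_pos.mpr hr).ne'

lemma br_inv_sq {r : ℝ} (hr : 0 < r) : (br r)⁻¹ ^ 2 = -I / r := by
  rw [inv_pow, br_sq hr, mul_inv, Complex.inv_I, div_eq_mul_inv]

lemma br_mul_zetaBar {r : ℝ} (hr : 0 < r) :
    br r * zetaBar (br r) =
      Real.sqrt r * Complex.exp (Real.pi * r / 12 - Real.pi / (12 * r)) := by
  rw [zetaBar, br_sq hr, br_inv_sq hr, br, mul_right_comm, ← Complex.exp_add, mul_comm]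
  congr 2
  linear_combination (-(Real.pi * r / 12) + Real.pi / (12 * r) : ℂ) * Complex.I_sq

lemma Gb_br {r : ℝ} (hr : 0 < r) (x : ℂ) :
    Gb (br r) (br r + (br r)⁻¹ + br r * x) =
      zetaBar (br r) * ((1 - Complex.exp (2 * Real.pi * I * x)) *
        ∏' n : ℕ, (1 - Complex.exp (2 * Real.pi * I * x) *
          Complex.exp (-(2 * Real.pi / r)) ^ (n + 1))) / qPochhammer (2 * Real.pi * r) x := by
  have hb := br_ne_zero hr
  have hnum (n : ℕ) : Complex.exp (2 * Real.pi * I * (br r)⁻¹ *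
      (br r + (br r)⁻¹ + br r * x - (n + 1) * (br r)⁻¹)) =
      Complex.exp (2 * Real.pi * I * x) * Complex.exp (-(2 * Real.pi / r)) ^ n := by
    rw [← Complex.exp_nat_mul, ← Complex.exp_add,
      ← Complex.exp_periodic (2 * Real.pi * I * x + n * -(2 * Real.pi / r))]
    congr 1
    linear_combination (2 * Real.pi * I * (1 + x)) * inv_mul_cancel₀ hb -
      (2 * Real.pi * I * n) * br_inv_sq hr + (2 * Real.pi * n / r : ℂ) * Complex.I_sq
  have hden (n : ℕ) : Complex.exp (2 * Real.pi * I * br r *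
      (br r + (br r)⁻¹ + br r * x + n * br r)) =
      Complex.exp (-((2 * Real.pi * r : ℝ) * (n + 1 + x))) := by
    rw [← Complex.exp_periodic (-((2 * Real.pi * r : ℝ) * (n + 1 + x)))]
    congr 1
    push_cast
    linear_combination (2 * Real.pi * I) * mul_inv_cancel₀ hb +
      (2 * Real.pi * I * (n + 1 + x)) * br_sq hr +
      (2 * Real.pi * r * (n + 1 + x) : ℂ) * Complex.I_sq
  have hnorm : ‖Complex.exp (-(2 * Real.pi / r))‖ < 1 := by
    rw [Complex.norm_exp, Real.exp_lt_one_iff]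
    have : 0 < 2 * Real.pi / r := by positivity
    have he : (-(2 * Real.pi / r : ℂ)) = ((-(2 * Real.pi / r) : ℝ) : ℂ) := by push_cast; rfl
    rw [he, Complex.ofReal_re]
    linarith
  have hmult : Multipliable fun n : ℕ => 1 - Complex.exp (2 * Real.pi * I * x) *
      Complex.exp (-(2 * Real.pi / r)) ^ (n + 1) := by
    simp_rw [sub_eq_add_neg]
    apply multipliable_one_add_of_summable
    simp_rw [norm_neg, norm_mul, norm_pow]
    exact ((summable_nat_add_iff 1).mpr
      (summable_geometric_of_lt_one (norm_nonneg _) hnorm)).mul_left _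
  rw [Gb]
  simp only [hnum, hden]
  rw [tprod_eq_zero_mul' (f := fun n : ℕ => 1 - Complex.exp (2 * Real.pi * I * x) *
    Complex.exp (-(2 * Real.pi / r)) ^ n) hmult, pow_zero, mul_one, qPochhammer]

/-- For `x ∉ {−1, −2, −3, …}`,
`lim_{r→0⁺} (2π b(r)) G_{b(r)}(Q(r) + b(r) x) / (2πr)^{x+1} = (1 − e^{2πix}) Γ(x+1)`,
where `Q(r) = b(r) + b(r)⁻¹`. -/
theorem stmt1 (x : ℂ) (hx : ∀ n : ℕ, x ≠ -((n : ℂ) + 1)) :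
    Tendsto
      (fun r : ℝ =>
        2 * (Real.pi : ℂ) * br r * Gb (br r) (br r + (br r)⁻¹ + br r * x) /
          ((2 * Real.pi * r : ℝ) : ℂ) ^ (x + 1))
      (𝓝[>] (0 : ℝ))
      (𝓝 ((1 - Complex.exp (2 * Real.pi * Complex.I * x)) * Complex.Gamma (x + 1))) := by
  have hs : Tendsto (fun r : ℝ => 2 * Real.pi * r) (𝓝[>] 0) (𝓝[>] 0) := by
    refine tendsto_nhdsWithin_iff.mpr ⟨?_, ?_⟩
    · have h : Tendsto (fun r : ℝ => 2 * Real.pi * r) (𝓝 0) (𝓝 (2 * Real.pi * 0)) :=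
        tendsto_id.const_mul _
      rw [mul_zero] at h
      exact h.mono_left nhdsWithin_le_nhds
    · filter_upwards [self_mem_nhdsWithin] with r (hr : 0 < r)
      exact mul_pos Real.two_pi_pos hr
  have hT (c : ℂ) := (tendsto_tprod_one_sub_mul_pow c).comp tendsto_exp_neg_two_pi_div
  have hlim := (((hT (Complex.exp (2 * Real.pi * I * x))).div (hT 1) one_ne_zero).const_mul
    (1 - Complex.exp (2 * Real.pi * I * x))).mul ((tendsto_qGamma hx).comp hs)
  rw [div_one, mul_one] at hlim
  refine hlim.congr' ?_
  filter_upwards [self_mem_nhdsWithin, (hT 1).eventually_ne one_ne_zero] with r (hr : 0 < r) hne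
  have hpos : 0 < 2 * Real.pi * r := mul_pos Real.two_pi_pos hr
  have hs0 : ((2 * Real.pi * r : ℝ) : ℂ) ≠ 0 := by exact_mod_cast hpos.ne'
  simp only [Pi.div_apply, Function.comp_apply] at hne ⊢
  have heta := sqrt_mul_tprod_eq_qPochhammer hr
  rw [← br_mul_zetaBar hr] at heta
  rw [Gb_br hr, Complex.cpow_add _ _ hs0, Complex.cpow_one]
  generalize (∏' n : ℕ, (1 - 1 * Complex.exp (-(2 * Real.pi / r)) ^ (n + 1))) = T at *
  have hr0 : (r : ℂ) ≠ 0 := by exact_mod_cast hr.ne'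
  have hkey : 2 * (Real.pi : ℂ) * br r * zetaBar (br r) =
      ((2 * Real.pi * r : ℝ) : ℂ) * (qPochhammer (2 * Real.pi * r) 0 / T) := by
    push_cast
    field_simp
    linear_combination heta
  generalize (∏' n : ℕ, (1 - Complex.exp (2 * Real.pi * I * x) *
    Complex.exp (-(2 * Real.pi / r)) ^ (n + 1))) = S
  rw [mul_div_assoc (zetaBar (br r)), ← mul_assoc, hkey]
  field_simp
end

section
/- For every real r > 0 one has the identity e^{−π/(12r)} · ∏_{n=1}^∞ (1 − e^{−2πn/r}) = √r · e^{−πr/12} · ∏_{n=1}^∞ (1 − e^{−2πrn}). -/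
open Complex in
lemma Complex.sqrt_ofReal_mul {r : ℝ} (hr : 0 < r) {z : ℂ} (hz : z ≠ 0) :
    Complex.sqrt (r * z) = (Real.sqrt r : ℂ) * Complex.sqrt z := by
  have hr' : (r : ℂ) ≠ 0 := ofReal_ne_zero.mpr hr.ne'
  rw [sqrt_eq_exp (mul_ne_zero hr' hz), sqrt_eq_exp hz, log_ofReal_mul hr hz, Real.sqrt_eq_rpow,
    Real.rpow_def_of_pos hr, ofReal_exp, ← Complex.exp_add]
  congr 1
  push_cast
  ring

lemma Complex.ofReal_tprod {ι : Type*} (f : ι → ℝ) :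
    ((∏' i, f i : ℝ) : ℂ) = ∏' i, (f i : ℂ) :=
  Complex.isometry_ofReal.isClosedEmbedding.map_tprod f (g := Complex.ofRealHom)

/-- The Dedekind eta function on the positive imaginary axis, as a real infinite product. -/
lemma ModularForm.eta_ofReal_mul_I (r : ℝ) :
    ModularForm.eta (r * Complex.I) =
      ((Real.exp (-Real.pi * r / 12) *
        ∏' n : ℕ, (1 - Real.exp (-2 * Real.pi * r * (n + 1))) : ℝ) : ℂ) := by
  rw [ModularForm.eta, Complex.ofReal_mul, Complex.ofReal_tprod]
  congr 1
  · rw [Function.Periodic.qParam, Complex.ofReal_exp]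
    congr 1
    push_cast
    linear_combination (Real.pi * r / 12 : ℂ) * Complex.I_sq
  · refine tprod_congr fun n ↦ ?_
    rw [ModularForm.eta_q_eq_cexp, Complex.ofReal_sub, Complex.ofReal_one, Complex.ofReal_exp]
    congr 2
    push_cast
    linear_combination (2 * Real.pi * r * (n + 1) : ℂ) * Complex.I_sq

/-- The Dedekind eta functional equation at `τ = ir`: for every `r > 0`,
`e^{−π/(12r)} ∏_{n=1}^∞ (1 − e^{−2πn/r}) = √r · e^{−πr/12} ∏_{n=1}^∞ (1 − e^{−2πrn})`. -/
theorem stmt3 (r : ℝ) (hr : 0 < r) :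
    Real.exp (-Real.pi / (12 * r)) * ∏' n : ℕ, (1 - Real.exp (-2 * Real.pi * (n + 1) / r)) =
      Real.sqrt r * Real.exp (-Real.pi * r / 12) *
        ∏' n : ℕ, (1 - Real.exp (-2 * Real.pi * r * (n + 1))) := by
  have hI : Complex.sqrt Complex.I ≠ 0 := by
    rw [sqrt_eq_exp Complex.I_ne_zero]
    exact Complex.exp_ne_zero _
  have hS : ModularForm.eta (-1 / (r * Complex.I)) =
      (Complex.sqrt Complex.I)⁻¹ *
        (Complex.sqrt (r * Complex.I) * ModularForm.eta (r * Complex.I)) :=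
    ModularForm.eta_comp_eq_csqrt_I_inv (x := r * Complex.I)
      (by simpa [UpperHalfPlane.upperHalfPlaneSet] using hr)
  have hinv : -1 / (r * Complex.I) = ((r⁻¹ : ℝ) : ℂ) * Complex.I := by
    rw [neg_div, one_div, mul_inv, Complex.inv_I, Complex.ofReal_inv, mul_neg, neg_neg]
  rw [hinv, Complex.sqrt_ofReal_mul hr Complex.I_ne_zero, mul_comm (Real.sqrt r : ℂ),
    mul_assoc, inv_mul_cancel_left₀ hI, ModularForm.eta_ofReal_mul_I, ModularForm.eta_ofReal_mul_I,
    ← Complex.ofReal_mul, Complex.ofReal_inj, ← mul_assoc] at hS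
  convert hS using 2
  · congr 1
    field_simp
  · refine tprod_congr fun n ↦ ?_
    congr 2
    field_simp
end
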